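/- arXiv:1002.0144 — 9 statements merged into one kernel-verified Lean document; each statement's English description precedes it below -/
import Mathlib

section
/- Let a, b, c, d : ℝ → ℝ be continuous and let ψ : ℝ × ℝ → ℂ be twice continuously differentiable in x and continuously differentiable in t, satisfying the time-dependent Schrödinger equation i ∂ψ/∂t = Hψ, i.e. i ψ_t(x,t) = −a(t) ψ_xx(x,t) + b(t) x² ψ(x,t) − i c(t) (ψ(x,t) + x ψ_x(x,t)) − i d(t) x ψ_x(x,t). Then the function ψ₁(x,t) := exp(∫₀ᵗ (c(s) − d(s)) ds) · ψ(x,t) satisfies the adjoint equation i ∂ψ₁/∂t = H†ψ₁, i.e. i (ψ₁)_t = −a (ψ₁)_xx + b x² ψ₁ − i d (ψ₁ + x (ψ₁)_x) − i c x (ψ₁)_x. -/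
/-- If ψ solves the Schrödinger equation i ψ_t = Hψ for the quadratic
Hamiltonian H = a p² + b x² + c px + d xp, then
ψ₁(x,t) = exp(∫₀ᵗ (c−d)) ψ(x,t) solves the adjoint equation i (ψ₁)_t = H† ψ₁. -/
theorem statement_0
    (a b c d : ℝ → ℝ) (ha : Continuous a) (hb : Continuous b)
    (hc : Continuous c) (hd : Continuous d)
    (ψ ψx ψxx ψt : ℝ → ℝ → ℂ)
    -- ψ is twice continuously differentiable in x
    (hψx : ∀ x t, HasDerivAt (fun x' => ψ x' t) (ψx x t) x)
    (hψxx : ∀ x t, HasDerivAt (fun x' => ψx x' t) (ψxx x t) x)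
    (hψxxC : Continuous fun p : ℝ × ℝ => ψxx p.1 p.2)
    -- ψ is continuously differentiable in t
    (hψt : ∀ x t, HasDerivAt (fun t' => ψ x t') (ψt x t) t)
    (hψtC : Continuous fun p : ℝ × ℝ => ψt p.1 p.2)
    -- the time-dependent Schrödinger equation i ψ_t = Hψ
    (hSE : ∀ x t, Complex.I * ψt x t =
        -(a t : ℂ) * ψxx x t + (b t : ℂ) * (x : ℂ) ^ 2 * ψ x t
          - Complex.I * (c t : ℂ) * (ψ x t + (x : ℂ) * ψx x t)
          - Complex.I * (d t : ℂ) * ((x : ℂ) * ψx x t))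
    (ψ₁ : ℝ → ℝ → ℂ)
    (hψ₁ : ∀ x t, ψ₁ x t =
        (Real.exp (∫ s in (0:ℝ)..t, c s - d s) : ℂ) * ψ x t) :
    -- the adjoint equation i (ψ₁)_t = H† ψ₁
    ∀ x t, Complex.I * deriv (fun t' => ψ₁ x t') t =
        -(a t : ℂ) * deriv (fun x' => deriv (fun x'' => ψ₁ x'' t) x') x
          + (b t : ℂ) * (x : ℂ) ^ 2 * ψ₁ x t
          - Complex.I * (d t : ℂ) * (ψ₁ x t + (x : ℂ) * deriv (fun x' => ψ₁ x' t) x)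
          - Complex.I * (c t : ℂ) * ((x : ℂ) * deriv (fun x' => ψ₁ x' t) x) := by
  intro x t
  have hE : ∀ t, HasDerivAt (fun t' => ((Real.exp (∫ s in (0:ℝ)..t', c s - d s) : ℝ) : ℂ))
      ((Real.exp (∫ s in (0:ℝ)..t, c s - d s) * (c t - d t) : ℝ) : ℂ) t := by
    intro t
    have h := (hc.sub hd).integral_hasStrictDerivAt 0 t
    exact h.hasDerivAt.exp.ofReal_comp
  have h1 : ∀ x, HasDerivAt (fun x' => ψ₁ x' t)
      ((Real.exp (∫ s in (0:ℝ)..t, c s - d s) : ℂ) * ψx x t) x := by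
    intro x
    simp only [hψ₁]
    exact (hψx x t).const_mul _
  have h2 : HasDerivAt (fun x' => deriv (fun x'' => ψ₁ x'' t) x')
      ((Real.exp (∫ s in (0:ℝ)..t, c s - d s) : ℂ) * ψxx x t) x := by
    have : (fun x' => deriv (fun x'' => ψ₁ x'' t) x') =
        fun x' => (Real.exp (∫ s in (0:ℝ)..t, c s - d s) : ℂ) * ψx x' t :=
      funext fun x' => (h1 x').deriv
    rw [this]
    exact (hψxx x t).const_mul _
  have h3 : HasDerivAt (fun t' => ψ₁ x t')
      (((Real.exp (∫ s in (0:ℝ)..t, c s - d s) * (c t - d t) : ℝ) : ℂ) * ψ x t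
        + (Real.exp (∫ s in (0:ℝ)..t, c s - d s) : ℂ) * ψt x t) t := by
    simp only [hψ₁]
    exact (hE t).mul (hψt x t)
  rw [h2.deriv, h3.deriv, (h1 x).deriv, hψ₁ x t, Complex.ofReal_mul, Complex.ofReal_sub]
  linear_combination (Real.exp (∫ s in (0:ℝ)..t, c s - d s) : ℂ) * hSE x t
end

section
/- (Eigenvalue problem for the linear invariants.) Let a, b, c, d : ℝ → ℝ be continuous with a, c continuously differentiable, a(t) ≠ 0, and let μ : ℝ → ℝ be a twice continuously differentiable solution of the characteristic equation μ′′ − (a′/a + 2c − 2d)μ′ + 4(ab − cd + ca′/(2a) − c′/2)μ = 0 with μ(t) > 0 on an open interval I. Set λ(t) = exp(∫₀ᵗ(c(s) − d(s))ds), α(t) = μ′/(4aμ) − c/(2a), β(t) = k·λ(t)/μ(t) for a real constant k, let γ : I → ℝ be any function, and define the kernel K(x,y,t) = (2πμ(t))^{−1/2} exp(i(α(t)x² + β(t)xy + γ(t)y²)). Then for every t ∈ I and all x, y ∈ ℝ the linear invariant P(t) = μ(t)p + ((2c(t)μ(t) − μ′(t))/(2a(t)))x satisfies the eigenvalue relation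 P(t)K(x,y,t) = k·λ(t)·y·K(x,y,t), where P(t)K = −iμ(t) ∂K/∂x + ((2cμ − μ′)/(2a)) x K. -/
open Real in
/-- λ(t) = exp(∫₀ᵗ (c(s) − d(s)) ds). -/
noncomputable def lamFun (c d : ℝ → ℝ) (t : ℝ) : ℝ :=
  Real.exp (∫ s in (0:ℝ)..t, c s - d s)

/-- α(t) = μ′/(4aμ) − c/(2a). -/
noncomputable def alphaFun (a c μ : ℝ → ℝ) (t : ℝ) : ℝ :=
  deriv μ t / (4 * a t * μ t) - c t / (2 * a t)

/-- β(t) = k·λ(t)/μ(t). -/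
noncomputable def betaFun (c d μ : ℝ → ℝ) (k t : ℝ) : ℝ :=
  k * lamFun c d t / μ t

/-- The kernel K(x,y,t) = (2πμ(t))^{−1/2} exp(i(α(t)x² + β(t)xy + γ(t)y²)). -/
noncomputable def Kker (a c d μ : ℝ → ℝ) (k : ℝ) (γ : ℝ → ℝ) (x y t : ℝ) : ℂ :=
  (1 / Real.sqrt (2 * Real.pi * μ t) : ℝ) *
    Complex.exp (Complex.I *
      ((alphaFun a c μ t : ℂ) * (x : ℂ) ^ 2 + (betaFun c d μ k t : ℂ) * (x : ℂ) * (y : ℂ)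
        + (γ t : ℂ) * (y : ℂ) ^ 2))

/-- Eigenvalue problem for the linear invariants: for any solution μ of
the characteristic equation, positive on an open interval (t₁,t₂), the linear invariant
P(t) = μ(t)p + ((2cμ − μ′)/(2a))x satisfies P(t)K(x,y,t) = k·λ(t)·y·K(x,y,t). -/
theorem statement_4
    (a b c d μ γ : ℝ → ℝ) (k t₁ t₂ : ℝ)
    (ha : ContDiff ℝ 1 a) (hc : ContDiff ℝ 1 c)
    (hb : Continuous b) (hd : Continuous d)
    (hane : ∀ t, a t ≠ 0)
    (hμ : ContDiff ℝ 2 μ)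
    -- the characteristic equation μ′′ − (a′/a + 2c − 2d)μ′ + 4σμ = 0
    (hchar : ∀ t, deriv (deriv μ) t - (deriv a t / a t + 2 * c t - 2 * d t) * deriv μ t
        + 4 * (a t * b t - c t * d t + c t * deriv a t / (2 * a t) - deriv c t / 2)
          * μ t = 0)
    (hμpos : ∀ t ∈ Set.Ioo t₁ t₂, 0 < μ t) :
    ∀ t ∈ Set.Ioo t₁ t₂, ∀ x y : ℝ,
      -Complex.I * (μ t : ℂ) * deriv (fun x' => Kker a c d μ k γ x' y t) x
          + (((2 * c t * μ t - deriv μ t) / (2 * a t) : ℝ) : ℂ) * (x : ℂ)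
            * Kker a c d μ k γ x y t
        = ((k * lamFun c d t * y : ℝ) : ℂ) * Kker a c d μ k γ x y t := by
  intro t ht x y
  have hm : (μ t : ℂ) ≠ 0 := by exact_mod_cast (hμpos t ht).ne'
  have han : (a t : ℂ) ≠ 0 := by exact_mod_cast hane t
  have hx : HasDerivAt (fun x' : ℝ => (x' : ℂ)) 1 x := Complex.ofRealCLM.hasDerivAt
  have hK : HasDerivAt (fun x' => Kker a c d μ k γ x' y t)
      (Complex.I * (2 * (alphaFun a c μ t : ℂ) * x + (betaFun c d μ k t : ℂ) * y)
        * Kker a c d μ k γ x y t) x := by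
    unfold Kker
    have h := (((((hx.pow 2).const_mul (alphaFun a c μ t : ℂ)).add
      ((hx.const_mul (betaFun c d μ k t : ℂ)).mul_const (y : ℂ))).add_const
        ((γ t : ℂ) * (y : ℂ) ^ 2)).const_mul Complex.I).cexp.const_mul
          ((1 / Real.sqrt (2 * Real.pi * μ t) : ℝ) : ℂ)
    refine h.congr_deriv ?_
    simp only [Pi.add_apply, Pi.pow_apply]
    push_cast
    ring
  rw [hK.deriv]
  have key : (μ t : ℂ) * (2 * (alphaFun a c μ t : ℂ) * x + (betaFun c d μ k t : ℂ) * y)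
      + (((2 * c t * μ t - deriv μ t) / (2 * a t) : ℝ) : ℂ) * (x : ℂ)
      = ((k * lamFun c d t * y : ℝ) : ℂ) := by
    unfold alphaFun betaFun
    push_cast
    field_simp
    ring
  rw [← key]
  linear_combination (-(μ t : ℂ) * (2 * (alphaFun a c μ t : ℂ) * x
    + (betaFun c d μ k t : ℂ) * y) * Kker a c d μ k γ x y t) * Complex.I_mul_I
end

section
/- Let a, b, c, d : ℝ → ℝ be continuous and let A, B, C : ℝ → ℝ be continuously differentiable satisfying A′ + 4aC − (3c + d)A = 0, B′ − 4bC + (c + 3d)B = 0, C′ + 2(aB − bA) − (c − d)C = 0. Let ψ : ℝ × ℝ → ℂ be smooth (with continuous mixed partial derivatives up to the orders appearing) and satisfy i ∂ψ/∂t = Hψ. Then the function ψ₁(x,t) := −A(t) ψ_xx(x,t) + B(t) x² ψ(x,t) − i C(t)(ψ(x,t) + 2x ψ_x(x,t)), i.e. ψ₁ = (A p² + B x² + C(px + xp))ψ, satisfies the adjoint equation i ∂ψ₁/∂t = H†ψ₁. -/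
/-- If A, B, C satisfy the system A′ + 4aC − (3c+d)A = 0,
B′ − 4bC + (c+3d)B = 0, C′ + 2(aB − bA) − (c−d)C = 0, and ψ solves i ψ_t = Hψ, then
ψ₁ = (A p² + B x² + C(px + xp))ψ = −Aψ_xx + Bx²ψ − iC(ψ + 2xψ_x) solves the adjoint
equation i (ψ₁)_t = H† ψ₁. -/
theorem statement_7
    (a b c d : ℝ → ℝ) (ha : Continuous a) (hb : Continuous b)
    (hc : Continuous c) (hd : Continuous d)
    (A B C : ℝ → ℝ)
    -- the first-order system for the coefficients of the quadratic invariant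
    (hA : ∀ t, HasDerivAt A ((3 * c t + d t) * A t - 4 * a t * C t) t)
    (hB : ∀ t, HasDerivAt B (4 * b t * C t - (c t + 3 * d t) * B t) t)
    (hC : ∀ t, HasDerivAt C ((c t - d t) * C t - 2 * (a t * B t - b t * A t)) t)
    (ψ ψx ψxx ψxxx ψxxxx ψt ψxt ψxxt : ℝ → ℝ → ℂ)
    -- smoothness of ψ in x (up to the orders appearing)
    (hψx : ∀ x t, HasDerivAt (fun x' => ψ x' t) (ψx x t) x)
    (hψxx : ∀ x t, HasDerivAt (fun x' => ψx x' t) (ψxx x t) x)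
    (hψxxx : ∀ x t, HasDerivAt (fun x' => ψxx x' t) (ψxxx x t) x)
    (hψxxxx : ∀ x t, HasDerivAt (fun x' => ψxxx x' t) (ψxxxx x t) x)
    -- smoothness in t: ψ, ψ_x and ψ_xx are differentiable in t
    (hψt : ∀ x t, HasDerivAt (fun t' => ψ x t') (ψt x t) t)
    (hψxt : ∀ x t, HasDerivAt (fun t' => ψx x t') (ψxt x t) t)
    (hψxxt : ∀ x t, HasDerivAt (fun t' => ψxx x t') (ψxxt x t) t)
    -- continuity / equality of the mixed partial derivatives
    (hmix1 : ∀ x t, HasDerivAt (fun x' => ψt x' t) (ψxt x t) x)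
    (hmix2 : ∀ x t, HasDerivAt (fun x' => ψxt x' t) (ψxxt x t) x)
    -- the time-dependent Schrödinger equation i ψ_t = Hψ
    (hSE : ∀ x t, Complex.I * ψt x t =
        -(a t : ℂ) * ψxx x t + (b t : ℂ) * (x : ℂ) ^ 2 * ψ x t
          - Complex.I * (c t : ℂ) * (ψ x t + (x : ℂ) * ψx x t)
          - Complex.I * (d t : ℂ) * ((x : ℂ) * ψx x t))
    (ψ₁ : ℝ → ℝ → ℂ)
    (hψ₁ : ∀ x t, ψ₁ x t =
        -(A t : ℂ) * ψxx x t + (B t : ℂ) * (x : ℂ) ^ 2 * ψ x t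
          - Complex.I * (C t : ℂ) * (ψ x t + 2 * (x : ℂ) * ψx x t)) :
    -- the adjoint equation i (ψ₁)_t = H† ψ₁
    ∀ x t, Complex.I * deriv (fun t' => ψ₁ x t') t =
        -(a t : ℂ) * deriv (fun x' => deriv (fun x'' => ψ₁ x'' t) x') x
          + (b t : ℂ) * (x : ℂ) ^ 2 * ψ₁ x t
          - Complex.I * (d t : ℂ) * (ψ₁ x t + (x : ℂ) * deriv (fun x' => ψ₁ x' t) x)
          - Complex.I * (c t : ℂ) * ((x : ℂ) * deriv (fun x' => ψ₁ x' t) x) := by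
  have hX : ∀ x : ℝ, HasDerivAt (fun y : ℝ => (y : ℂ)) 1 x := fun x => Complex.ofRealCLM.hasDerivAt
  have hI : Complex.I ^ 2 = -1 := Complex.I_sq
  -- first x-derivative of the equation
  have hSE1 : ∀ x t, Complex.I * ψxt x t =
      -(a t : ℂ) * ψxxx x t + (b t : ℂ) * (2 * (x : ℂ) * ψ x t + (x : ℂ) ^ 2 * ψx x t)
        - Complex.I * (c t : ℂ) * (2 * ψx x t + (x : ℂ) * ψxx x t)
        - Complex.I * (d t : ℂ) * (ψx x t + (x : ℂ) * ψxx x t) := by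
    intro x t
    have h1 := (hmix1 x t).const_mul Complex.I
    have h2 := (((((hψxxx x t).const_mul (-(a t : ℂ))).add
      ((((hX x).pow 2).const_mul (b t : ℂ)).mul (hψx x t))).sub
      (((hψx x t).add ((hX x).mul (hψxx x t))).const_mul (Complex.I * (c t : ℂ)))).sub
      (((hX x).mul (hψxx x t)).const_mul (Complex.I * (d t : ℂ))))
    have h3 := h1.unique (h2.congr_of_eventuallyEq (Filter.Eventually.of_forall fun y => by
      simpa using hSE y t))
    rw [h3]
    simp
    ring
  have hSE2 : ∀ x t, Complex.I * ψxxt x t =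
      -(a t : ℂ) * ψxxxx x t
        + (b t : ℂ) * (2 * ψ x t + 4 * (x : ℂ) * ψx x t + (x : ℂ) ^ 2 * ψxx x t)
        - Complex.I * (c t : ℂ) * (3 * ψxx x t + (x : ℂ) * ψxxx x t)
        - Complex.I * (d t : ℂ) * (2 * ψxx x t + (x : ℂ) * ψxxx x t) := by
    intro x t
    have h1 := (hmix2 x t).const_mul Complex.I
    have h2 := (((((hψxxxx x t).const_mul (-(a t : ℂ))).add
      (((((hX x).const_mul 2).mul (hψx x t)).add
        (((hX x).pow 2).mul (hψxx x t))).const_mul (b t : ℂ))).sub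
      ((((hψxx x t).const_mul 2).add
        ((hX x).mul (hψxxx x t))).const_mul (Complex.I * (c t : ℂ)))).sub
      (((hψxx x t).add ((hX x).mul (hψxxx x t))).const_mul (Complex.I * (d t : ℂ))))
    have h3 := h1.unique (h2.congr_of_eventuallyEq (Filter.Eventually.of_forall fun y => by
      simpa using hSE1 y t))
    rw [h3]
    simp
    ring
  -- x-derivatives of ψ₁
  have hD1 : ∀ x t, HasDerivAt (fun x' => ψ₁ x' t)
      (-(A t : ℂ) * ψxxx x t + (B t : ℂ) * (2 * (x : ℂ) * ψ x t + (x : ℂ) ^ 2 * ψx x t)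
        - Complex.I * (C t : ℂ) * (3 * ψx x t + 2 * (x : ℂ) * ψxx x t)) x := by
    intro x t
    have h2 := ((((hψxxx x t).const_mul (-(A t : ℂ))).add
      ((((hX x).pow 2).const_mul (B t : ℂ)).mul (hψx x t))).sub
      (((hψx x t).add (((hX x).const_mul 2).mul (hψxx x t))).const_mul
        (Complex.I * (C t : ℂ))))
    have h3 := h2.congr_of_eventuallyEq (f₁ := fun x' => ψ₁ x' t)
      (Filter.Eventually.of_forall fun y => by simpa using hψ₁ y t)
    refine h3.congr_deriv ?_
    simp
    ring
  have hD2 : ∀ x t, HasDerivAt (fun x' => deriv (fun x'' => ψ₁ x'' t) x')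
      (-(A t : ℂ) * ψxxxx x t
        + (B t : ℂ) * (2 * ψ x t + 4 * (x : ℂ) * ψx x t + (x : ℂ) ^ 2 * ψxx x t)
        - Complex.I * (C t : ℂ) * (5 * ψxx x t + 2 * (x : ℂ) * ψxxx x t)) x := by
    intro x t
    have h2 := ((((hψxxxx x t).const_mul (-(A t : ℂ))).add
      (((((hX x).const_mul 2).mul (hψx x t)).add
        (((hX x).pow 2).mul (hψxx x t))).const_mul (B t : ℂ))).sub
      ((((hψxx x t).const_mul 3).add (((hX x).const_mul 2).mul (hψxxx x t))).const_mul
        (Complex.I * (C t : ℂ))))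
    have h3 := h2.congr_of_eventuallyEq (f₁ := fun x' => deriv (fun x'' => ψ₁ x'' t) x')
      (Filter.Eventually.of_forall fun y => by simpa using (hD1 y t).deriv)
    refine h3.congr_deriv ?_
    simp
    ring
  -- t-derivative of ψ₁
  have hT : ∀ x t, HasDerivAt (fun t' => ψ₁ x t')
      (-(((3 * c t + d t) * A t - 4 * a t * C t : ℝ) : ℂ) * ψxx x t - (A t : ℂ) * ψxxt x t
        + (((4 * b t * C t - (c t + 3 * d t) * B t : ℝ) : ℂ) * ψ x t
            + (B t : ℂ) * ψt x t) * (x : ℂ) ^ 2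
        - Complex.I * ((((c t - d t) * C t - 2 * (a t * B t - b t * A t) : ℝ) : ℂ)
            * (ψ x t + 2 * (x : ℂ) * ψx x t)
            + (C t : ℂ) * (ψt x t + 2 * (x : ℂ) * ψxt x t))) t := by
    intro x t
    have h2 := (((((hA t).ofReal_comp).neg.mul (hψxxt x t)).add
      ((((hB t).ofReal_comp).mul_const ((x : ℂ) ^ 2)).mul (hψt x t))).sub
      ((((hC t).ofReal_comp).const_mul Complex.I).mul
        ((hψt x t).add ((hψxt x t).const_mul (2 * (x : ℂ))))))
    have h3 := h2.congr_of_eventuallyEq (f₁ := fun t' => ψ₁ x t')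
      (Filter.Eventually.of_forall fun y => by simpa using hψ₁ x y)
    refine h3.congr_deriv ?_
    simp
    ring
  intro x t
  rw [(hT x t).deriv, (hD2 x t).deriv, (hD1 x t).deriv, hψ₁ x t]
  push_cast
  have e0 := hSE x t
  have e1 := hSE1 x t
  have e2 := hSE2 x t
  linear_combination (-(A t : ℂ)) * e2 + ((B t : ℂ) * (x : ℂ) ^ 2 - Complex.I * (C t : ℂ)) * e0
    - 2 * Complex.I * (C t : ℂ) * (x : ℂ) * e1
    + (2 * ((a t : ℂ) * (B t : ℂ) - (A t : ℂ) * (b t : ℂ))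
        * (ψ x t + 2 * (x : ℂ) * ψx x t)) * hI
end

section
/- Fix t and let a, c, d, κ, κ′ be real numbers with a ≠ 0, κ > 0, let C₀ > 0, and set λ > 0 a positive real (the value of exp(∫₀ᵗ(c−d)ds)), ω = 2√C₀·λ, ρ = ((c+d)κ − κ′)/(2a), θ = −ρ/(2κ), ε = C₀^{1/4}/κ. Define the quadratic invariant acting on smooth f : ℝ → ℂ by (E f)(x) = λ·[−κ² f″(x) − iκρ (f(x) + 2x f′(x)) + (ρ² + C₀/κ²) x² f(x)]. Then for every natural number n, the function Ψₙ(x) = exp(iθx²)·exp(−ε²x²/2)·Hₙ(εx), where Hₙ is the n-th physicists' Hermite polynomial, satisfies (E Ψₙ)(x) = ω(n + 1/2)·Ψₙ(x) for all x ∈ ℝ. -/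
/-- The physicists' Hermite polynomials: H₀ = 1, Hₙ₊₁(ξ) = 2ξHₙ(ξ) − Hₙ′(ξ). -/
noncomputable def physHermite : ℕ → Polynomial ℝ
  | 0 => 1
  | n + 1 => 2 * Polynomial.X * physHermite n - Polynomial.derivative (physHermite n)

/-- Hₙ(x), the n-th physicists' Hermite polynomial evaluated at x. -/
noncomputable def pH (n : ℕ) (x : ℝ) : ℝ := (physHermite n).eval x

/-- ρ = ((c+d)κ − κ′)/(2a). -/
noncomputable def rho9 (a c d κ κ' : ℝ) : ℝ := ((c + d) * κ - κ') / (2 * a)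

/-- θ = −ρ/(2κ). -/
noncomputable def theta9 (a c d κ κ' : ℝ) : ℝ := -(rho9 a c d κ κ') / (2 * κ)

/-- ε = C₀^{1/4}/κ. -/
noncomputable def eps9 (κ C₀ : ℝ) : ℝ := C₀ ^ ((1 : ℝ) / 4) / κ

/-- Ψₙ(x) = exp(iθx²)·exp(−ε²x²/2)·Hₙ(εx). -/
noncomputable def Psi9 (a c d κ κ' C₀ : ℝ) (n : ℕ) (x : ℝ) : ℂ :=
  Complex.exp (Complex.I * (theta9 a c d κ κ' : ℂ) * (x : ℂ) ^ 2) *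
    (Real.exp (-(eps9 κ C₀) ^ 2 * x ^ 2 / 2) : ℂ) * (pH n (eps9 κ C₀ * x) : ℂ)

/-- The quadratic invariant E f = λ·[−κ²f″ − iκρ(f + 2xf′) + (ρ² + C₀/κ²)x²f]. -/
noncomputable def Eop9 (a c d κ κ' C₀ lam : ℝ) (f : ℝ → ℂ) (x : ℝ) : ℂ :=
  (lam : ℂ) * (-(κ : ℂ) ^ 2 * deriv (deriv f) x
    - Complex.I * (κ : ℂ) * (rho9 a c d κ κ' : ℂ) * (f x + 2 * (x : ℂ) * deriv f x)
    + (((rho9 a c d κ κ') ^ 2 + C₀ / κ ^ 2 : ℝ) : ℂ) * (x : ℂ) ^ 2 * f x)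

theorem physHermite_ode (n : ℕ) :
    Polynomial.derivative (Polynomial.derivative (physHermite n))
      = 2 * Polynomial.X * Polynomial.derivative (physHermite n)
        - 2 * (n : Polynomial ℝ) * physHermite n := by
  induction n with
  | zero => simp [physHermite]
  | succ n ih =>
    have h1 : Polynomial.derivative (physHermite (n + 1))
        = 2 * ((n : Polynomial ℝ) + 1) * physHermite n := by
      simp only [physHermite, Polynomial.derivative_sub, Polynomial.derivative_mul,
        Polynomial.derivative_X, Polynomial.derivative_ofNat, ih]
      ring
    rw [h1]
    simp only [physHermite, Polynomial.derivative_mul, Polynomial.derivative_add,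
      Polynomial.derivative_natCast, Polynomial.derivative_ofNat, Polynomial.derivative_one]
    push_cast
    ring

theorem hasDerivAt_evalC (P : Polynomial ℝ) (e x : ℝ) :
    HasDerivAt (fun y : ℝ => ((P.eval (e * y) : ℝ) : ℂ))
      ((e : ℂ) * ((Polynomial.derivative P).eval (e * x) : ℝ)) x := by
  have h1 : HasDerivAt (fun y : ℝ => e * y) e x := by
    simpa using (hasDerivAt_id x).const_mul e
  have h2 := ((P.hasDerivAt (e * x)).comp x h1).ofReal_comp
  refine HasDerivAt.congr_deriv h2 ?_
  push_cast
  ring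

theorem hasDerivAt_gaussC (α : ℂ) (x : ℝ) :
    HasDerivAt (fun y : ℝ => Complex.exp (α * (y : ℂ) ^ 2))
      (Complex.exp (α * (x : ℂ) ^ 2) * (2 * α * x)) x := by
  have h0 : HasDerivAt (fun y : ℝ => (y : ℂ)) 1 x := (hasDerivAt_id x).ofReal_comp
  have h := ((h0.pow 2).const_mul α).cexp
  refine HasDerivAt.congr_deriv h ?_
  simp only [Pi.pow_apply]
  push_cast
  ring

theorem hasDerivAt_gauss_polyC (α : ℂ) (P : Polynomial ℝ) (e x : ℝ) :
    HasDerivAt (fun y : ℝ => Complex.exp (α * (y : ℂ) ^ 2) * ((P.eval (e * y) : ℝ) : ℂ))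
      (2 * α * (x * (Complex.exp (α * (x : ℂ) ^ 2) * ((P.eval (e * x) : ℝ) : ℂ))) +
        e * (Complex.exp (α * (x : ℂ) ^ 2) *
          (((Polynomial.derivative P).eval (e * x) : ℝ) : ℂ))) x := by
  have h := (hasDerivAt_gaussC α x).mul (hasDerivAt_evalC P e x)
  refine HasDerivAt.congr_deriv h ?_
  ring

/-- the functions Ψₙ(x) = exp(iθx²)exp(−ε²x²/2)Hₙ(εx) are eigenfunctions
of the quadratic invariant E with eigenvalues ω(n + 1/2), ω = 2√C₀·λ. -/
theorem statement_9
    (a c d κ κ' C₀ lam : ℝ)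
    (ha : a ≠ 0) (hκ : 0 < κ) (hC₀ : 0 < C₀) (hlam : 0 < lam) :
    ∀ n : ℕ, ∀ x : ℝ,
      Eop9 a c d κ κ' C₀ lam (Psi9 a c d κ κ' C₀ n) x
        = ((2 * Real.sqrt C₀ * lam : ℝ) : ℂ) * ((n : ℂ) + 1 / 2)
            * Psi9 a c d κ κ' C₀ n x := by
  intro n x
  have hk : (κ : ℂ) ≠ 0 := by exact_mod_cast hκ.ne'
  obtain ⟨r, hr⟩ : ∃ r, r = rho9 a c d κ κ' := ⟨_, rfl⟩
  obtain ⟨e, he⟩ : ∃ e, e = eps9 κ C₀ := ⟨_, rfl⟩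
  have hs : Real.sqrt C₀ = e ^ 2 * κ ^ 2 := by
    rw [he, eps9, div_pow, div_mul_cancel₀ _ (by positivity), ← Real.rpow_natCast,
      ← Real.rpow_mul hC₀.le, Real.sqrt_eq_rpow]
    norm_num
  have hC : C₀ = e ^ 4 * κ ^ 4 := by
    rw [← Real.sq_sqrt hC₀.le, hs]; ring
  have hC2 : C₀ / κ ^ 2 = e ^ 4 * κ ^ 2 := by
    rw [hC]; field_simp
  obtain ⟨α, hα⟩ : ∃ α : ℂ, α = -(Complex.I * r) / (2 * κ) - e ^ 2 / 2 := ⟨_, rfl⟩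
  have hακ : 2 * κ * α = -(Complex.I * r) - κ * e ^ 2 := by
    rw [hα]; field_simp
  have hΨ : Psi9 a c d κ κ' C₀ n = fun y : ℝ =>
      Complex.exp (α * (y : ℂ) ^ 2) * (((physHermite n).eval (e * y) : ℝ) : ℂ) := by
    funext y
    rw [Psi9, theta9, ← hr, ← he, pH, Complex.ofReal_exp, ← Complex.exp_add, hα]
    congr 2
    push_cast
    ring
  have hd := fun y : ℝ => hasDerivAt_gauss_polyC α (physHermite n) e y
  have hd2 := fun y : ℝ => hasDerivAt_gauss_polyC α (Polynomial.derivative (physHermite n)) e y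
  have h0 : HasDerivAt (fun y : ℝ => (y : ℂ)) 1 x := (hasDerivAt_id x).ofReal_comp
  have D1 := funext fun y => (hd y).deriv
  rw [← hΨ] at D1
  have D2 := (((h0.mul (hd x)).const_mul (2 * α)).add ((hd2 x).const_mul (e : ℂ))).deriv
  have D3 := (congrArg (fun f => deriv f x) D1).trans D2
  have ode := congrArg (fun P : Polynomial ℝ => ((P.eval (e * x) : ℝ) : ℂ)) (physHermite_ode n)
  simp only [Polynomial.eval_sub, Polynomial.eval_mul, Polynomial.eval_X,
    Polynomial.eval_natCast, Polynomial.eval_ofNat] at ode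
  push_cast at ode
  rw [Eop9, D3, D1, hΨ, ← hr, hC2, hs]
  simp only [ode]
  push_cast
  generalize Complex.exp (α * (x : ℂ) ^ 2) = G
  generalize (((physHermite n).eval (e * x) : ℝ) : ℂ) = H
  generalize (((Polynomial.derivative (physHermite n)).eval (e * x) : ℝ) : ℂ) = H'
  have hR : Complex.I * r = -(2 * κ * α) - κ * e ^ 2 := by rw [hακ]; ring
  have hR2 : (r : ℂ) ^ 2 = -(-(2 * κ * α) - κ * e ^ 2) ^ 2 := by
    rw [← hR, mul_pow, Complex.I_sq]; ring
  rw [hR2, mul_right_comm Complex.I (κ : ℂ) (r : ℂ), hR]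
  ring
end

section
/- (Pinney's nonlinear superposition.) Let a, b, c, d : ℝ → ℝ with a, c, d continuously differentiable, b continuous, a(t) ≠ 0 on an open interval I, and let Q(t) = 4ab + (a′/a − c − d)(c+d) − c′ − d′. Let κ₁, κ₂ : I → ℝ be twice continuously differentiable solutions of the homogeneous equation κ′′ − (a′/a)κ′ + Qκ = 0, with Wronskian W(t) = κ₁κ₂′ − κ₁′κ₂. Then: (i) W(t)/(2a(t)) is constant on I; (ii) if C₁, C₂, C₃ are real constants with C₁κ₁(t)² + C₂κ₂(t)² + 2C₃κ₁(t)κ₂(t) > 0 on I, then κ(t) := √(C₁κ₁² + C₂κ₂² + 2C₃κ₁κ₂) satisfies the auxiliary equation κ′′ − (a′/a)κ′ + Qκ = C₀(2a)²/κ³ on I, where C₀ = (C₁C₂ − C₃²)·(W/(2a))². -/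
/-- Q(t) = 4ab + (a′/a − c − d)(c+d) − c′ − d′. -/
noncomputable def Qfun (a b c d : ℝ → ℝ) (t : ℝ) : ℝ :=
  4 * a t * b t + (deriv a t / a t - c t - d t) * (c t + d t) - deriv c t - deriv d t

/-- The Wronskian W = κ₁κ₂′ − κ₁′κ₂. -/
noncomputable def Wfun (κ₁ κ₂ : ℝ → ℝ) (t : ℝ) : ℝ :=
  κ₁ t * deriv κ₂ t - deriv κ₁ t * κ₂ t

/-- First and second derivatives of a C² function on an open interval. -/
lemma hasDeriv_aux {k : ℝ → ℝ} {t₁ t₂ : ℝ} (hk : ContDiffOn ℝ 2 k (Set.Ioo t₁ t₂)) :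
    ∀ t ∈ Set.Ioo t₁ t₂, HasDerivAt k (deriv k t) t ∧
      HasDerivAt (deriv k) (deriv (deriv k) t) t := by
  intro t ht
  have hn : Set.Ioo t₁ t₂ ∈ nhds t := isOpen_Ioo.mem_nhds ht
  have h1 : ContDiffOn ℝ 1 (deriv k) (Set.Ioo t₁ t₂) :=
    hk.deriv_of_isOpen isOpen_Ioo (by norm_num)
  exact ⟨((hk.differentiableOn (by norm_num)).differentiableAt hn).hasDerivAt,
    ((h1.differentiableOn (by norm_num)).differentiableAt hn).hasDerivAt⟩

/-- Pinney's nonlinear superposition: for two solutions κ₁, κ₂ of the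
homogeneous equation κ′′ − (a′/a)κ′ + Qκ = 0 on an open interval (t₁,t₂):
(i) W/(2a) is constant; (ii) κ = √(C₁κ₁² + C₂κ₂² + 2C₃κ₁κ₂) solves the auxiliary
equation κ′′ − (a′/a)κ′ + Qκ = C₀(2a)²/κ³ with C₀ = (C₁C₂ − C₃²)(W/(2a))². -/
theorem statement_11
    (a b c d κ₁ κ₂ : ℝ → ℝ) (t₁ t₂ : ℝ) (C₁ C₂ C₃ : ℝ)
    (ha : ContDiff ℝ 1 a) (hc : ContDiff ℝ 1 c) (hd : ContDiff ℝ 1 d)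
    (hb : Continuous b)
    (hane : ∀ t ∈ Set.Ioo t₁ t₂, a t ≠ 0)
    (hκ₁ : ContDiffOn ℝ 2 κ₁ (Set.Ioo t₁ t₂)) (hκ₂ : ContDiffOn ℝ 2 κ₂ (Set.Ioo t₁ t₂))
    (hEq1 : ∀ t ∈ Set.Ioo t₁ t₂, deriv (deriv κ₁) t - (deriv a t / a t) * deriv κ₁ t
        + Qfun a b c d t * κ₁ t = 0)
    (hEq2 : ∀ t ∈ Set.Ioo t₁ t₂, deriv (deriv κ₂) t - (deriv a t / a t) * deriv κ₂ t
        + Qfun a b c d t * κ₂ t = 0)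
    (hpos : ∀ t ∈ Set.Ioo t₁ t₂,
        0 < C₁ * κ₁ t ^ 2 + C₂ * κ₂ t ^ 2 + 2 * C₃ * κ₁ t * κ₂ t) :
    -- (i) W/(2a) is constant on the interval
    (∀ s ∈ Set.Ioo t₁ t₂, ∀ t ∈ Set.Ioo t₁ t₂,
        Wfun κ₁ κ₂ s / (2 * a s) = Wfun κ₁ κ₂ t / (2 * a t)) ∧
    -- (ii) κ = √(C₁κ₁² + C₂κ₂² + 2C₃κ₁κ₂) solves the auxiliary equation
    (∀ t ∈ Set.Ioo t₁ t₂,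
        deriv (deriv fun s =>
            Real.sqrt (C₁ * κ₁ s ^ 2 + C₂ * κ₂ s ^ 2 + 2 * C₃ * κ₁ s * κ₂ s)) t
          - (deriv a t / a t) * deriv (fun s =>
              Real.sqrt (C₁ * κ₁ s ^ 2 + C₂ * κ₂ s ^ 2 + 2 * C₃ * κ₁ s * κ₂ s)) t
          + Qfun a b c d t *
              Real.sqrt (C₁ * κ₁ t ^ 2 + C₂ * κ₂ t ^ 2 + 2 * C₃ * κ₁ t * κ₂ t)
        = ((C₁ * C₂ - C₃ ^ 2) * (Wfun κ₁ κ₂ t / (2 * a t)) ^ 2) * (2 * a t) ^ 2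
            / Real.sqrt (C₁ * κ₁ t ^ 2 + C₂ * κ₂ t ^ 2 + 2 * C₃ * κ₁ t * κ₂ t) ^ 3) := by
  have D1 := hasDeriv_aux hκ₁
  have D2 := hasDeriv_aux hκ₂
  constructor
  · have hder : ∀ t ∈ Set.Ioo t₁ t₂,
        HasDerivAt (fun s => Wfun κ₁ κ₂ s / (2 * a s)) 0 t := by
      intro t ht
      have hat : HasDerivAt a (deriv a t) t :=
        (ha.differentiable (by norm_num) t).hasDerivAt
      have ha0 := hane t ht
      obtain ⟨p1, q1⟩ := D1 t ht
      obtain ⟨p2, q2⟩ := D2 t ht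
      have e1 := hEq1 t ht
      have e2 := hEq2 t ht
      have h := ((p1.mul q2).sub (q1.mul p2)).div (hat.const_mul 2)
        (mul_ne_zero two_ne_zero ha0)
      refine HasDerivAt.congr_deriv (f' := _) h ?_
      have e1' : deriv (deriv κ₁) t
          = (deriv a t / a t) * deriv κ₁ t - Qfun a b c d t * κ₁ t := by linarith
      have e2' : deriv (deriv κ₂) t
          = (deriv a t / a t) * deriv κ₂ t - Qfun a b c d t * κ₂ t := by linarith
      simp only [Pi.mul_apply, Pi.sub_apply]
      rw [e1', e2']
      field_simp
      ring
    intro s hs t ht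
    exact isOpen_Ioo.is_const_of_deriv_eq_zero isPreconnected_Ioo
      (f := fun s => Wfun κ₁ κ₂ s / (2 * a s))
      (fun x hx => (hder x hx).differentiableAt.differentiableWithinAt)
      (fun x hx => (hder x hx).deriv) hs ht
  · intro t ht
    set f : ℝ → ℝ := fun s => C₁ * κ₁ s ^ 2 + C₂ * κ₂ s ^ 2 + 2 * C₃ * κ₁ s * κ₂ s with hf
    set g : ℝ → ℝ := fun s => 2 * (C₁ * (κ₁ s * deriv κ₁ s) + C₂ * (κ₂ s * deriv κ₂ s)
      + C₃ * (deriv κ₁ s * κ₂ s + κ₁ s * deriv κ₂ s)) with hg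
    have hfd : ∀ s ∈ Set.Ioo t₁ t₂, HasDerivAt f (g s) s := by
      intro s hs
      obtain ⟨p1, -⟩ := D1 s hs
      obtain ⟨p2, -⟩ := D2 s hs
      have h := (((p1.pow 2).const_mul C₁).add ((p2.pow 2).const_mul C₂)).add
        ((p1.const_mul (2 * C₃)).mul p2)
      refine HasDerivAt.congr_deriv (f' := _) h ?_
      simp only [hg]
      push_cast
      ring
    have hrd : ∀ s ∈ Set.Ioo t₁ t₂,
        HasDerivAt (fun s => Real.sqrt (f s)) (g s / (2 * Real.sqrt (f s))) s :=
      fun s hs => (hfd s hs).sqrt (hpos s hs).ne'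
    have hev : deriv (fun s => Real.sqrt (f s))
        =ᶠ[nhds t] fun s => g s / (2 * Real.sqrt (f s)) := by
      filter_upwards [isOpen_Ioo.mem_nhds ht] with s hs
      exact (hrd s hs).deriv
    obtain ⟨p1, q1⟩ := D1 t ht
    obtain ⟨p2, q2⟩ := D2 t ht
    have hgd : HasDerivAt g _ t := ((((p1.mul q1).const_mul C₁).add
      ((p2.mul q2).const_mul C₂)).add
        (((q1.mul p2).add (p1.mul q2)).const_mul C₃)).const_mul 2
    have hf0 : 0 < f t := hpos t ht
    have hr0 : 0 < Real.sqrt (f t) := Real.sqrt_pos.mpr hf0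
    have h2 := (hgd.div ((hrd t ht).const_mul 2) (by positivity)).deriv
    have hdd : deriv (deriv fun s => Real.sqrt (f s)) t = _ := hev.deriv_eq.trans h2
    have ha0 := hane t ht
    have e1 : deriv (deriv κ₁) t
        = (deriv a t / a t) * deriv κ₁ t - Qfun a b c d t * κ₁ t := by linarith [hEq1 t ht]
    have e2 : deriv (deriv κ₂) t
        = (deriv a t / a t) * deriv κ₂ t - Qfun a b c d t * κ₂ t := by linarith [hEq2 t ht]
    change deriv (deriv fun s => Real.sqrt (f s)) t
      - (deriv a t / a t) * deriv (fun s => Real.sqrt (f s)) t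
      + Qfun a b c d t * Real.sqrt (f t)
      = ((C₁ * C₂ - C₃ ^ 2) * (Wfun κ₁ κ₂ t / (2 * a t)) ^ 2) * (2 * a t) ^ 2
            / Real.sqrt (f t) ^ 3
    rw [hdd, (hrd t ht).deriv, e1, e2]
    have hW : ((C₁ * C₂ - C₃ ^ 2) * (Wfun κ₁ κ₂ t / (2 * a t)) ^ 2) * (2 * a t) ^ 2
        = (C₁ * C₂ - C₃ ^ 2) * (κ₁ t * deriv κ₂ t - deriv κ₁ t * κ₂ t) ^ 2 := by
      unfold Wfun
      field_simp
    rw [hW]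
    have hsq : Real.sqrt (f t) ^ 2
        = C₁ * κ₁ t ^ 2 + C₂ * κ₂ t ^ 2 + 2 * C₃ * κ₁ t * κ₂ t := Real.sq_sqrt hf0.le
    have hgt : g t = 2 * (C₁ * (κ₁ t * deriv κ₁ t) + C₂ * (κ₂ t * deriv κ₂ t)
      + C₃ * (deriv κ₁ t * κ₂ t + κ₁ t * deriv κ₂ t)) := rfl
    rw [hgt]
    clear_value f g
    generalize Real.sqrt (f t) = r at *
    generalize deriv a t / a t = A at *
    generalize Qfun a b c d t = Q at *
    generalize deriv κ₁ t = y1 at *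
    generalize deriv κ₂ t = y2 at *
    generalize κ₁ t = x1 at *
    generalize κ₂ t = x2 at *
    have hrne := hr0.ne'
    have h4 : r ^ 4 = (C₁ * x1 ^ 2 + C₂ * x2 ^ 2 + 2 * C₃ * x1 * x2) ^ 2 := by
      rw [← hsq]; ring
    rw [eq_div_iff (by positivity)]
    field_simp
    ring_nf
    simp only [h4, hsq]
    ring
end

section
/- (General nonlinear superposition principle for Ermakov's equations.) Let a, b, c, d : ℝ → ℝ with a, c, d continuously differentiable, b continuous, a(t) ≠ 0 on an open interval I, and Q(t) = 4ab + (a′/a − c − d)(c+d) − c′ − d′. Let κ₁, κ₂ : I → ℝ be twice continuously differentiable nonvanishing solutions of the Ermakov equations κᵢ′′ − (a′/a)κᵢ′ + Qκᵢ = C₀⁽ⁱ⁾(2a)²/κᵢ³ (i = 1, 2) with real constants C₀⁽¹⁾, C₀⁽²⁾, and set W = κ₁κ₂′ − κ₁′κ₂ and J(t) = (W/(2a))² + C₀⁽¹⁾(κ₂/κ₁)² + C₀⁽²⁾(κ₁/κ₂)². Let D₁, D₂ be real constants with D₁κ₁(t)² + D₂κ₂(t)² > 0 on I and set κ(t) :=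 √(D₁κ₁² + D₂κ₂²). Then J is constant on I, and κ satisfies the Ermakov equation κ′′ − (a′/a)κ′ + Qκ = C₀(2a)²/κ³ on I with constant C₀ = C₀⁽¹⁾D₁² + C₀⁽²⁾D₂² + D₁D₂·J. -/
/-- J(t) = (W/(2a))² + C₀⁽¹⁾(κ₂/κ₁)² + C₀⁽²⁾(κ₁/κ₂)². -/
noncomputable def Jfun (a κ₁ κ₂ : ℝ → ℝ) (C₀₁ C₀₂ : ℝ) (t : ℝ) : ℝ :=
  (Wfun κ₁ κ₂ t / (2 * a t)) ^ 2 + C₀₁ * (κ₂ t / κ₁ t) ^ 2 + C₀₂ * (κ₁ t / κ₂ t) ^ 2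

/-- Derivatives of a function that is twice continuously differentiable on an open interval. -/
lemma hasDerivs_aux (f : ℝ → ℝ) (t₁ t₂ : ℝ) (hf : ContDiffOn ℝ 2 f (Set.Ioo t₁ t₂)) :
    ∀ t ∈ Set.Ioo t₁ t₂, HasDerivAt f (deriv f t) t ∧
      HasDerivAt (deriv f) (deriv (deriv f) t) t := by
  intro t ht
  have hn : Set.Ioo t₁ t₂ ∈ nhds t := isOpen_Ioo.mem_nhds ht
  refine ⟨((hf.differentiableOn (by norm_num)).differentiableAt hn).hasDerivAt, ?_⟩
  have h1 : ContDiffOn ℝ 1 (deriv f) (Set.Ioo t₁ t₂) :=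
    hf.deriv_of_isOpen isOpen_Ioo (by norm_num)
  exact ((h1.differentiableOn (by norm_num)).differentiableAt hn).hasDerivAt

/-- General nonlinear superposition principle for Ermakov's equations:
if κ₁, κ₂ solve κᵢ′′ − (a′/a)κᵢ′ + Qκᵢ = C₀⁽ⁱ⁾(2a)²/κᵢ³ on an open interval (t₁,t₂),
then J is constant, and κ = √(D₁κ₁² + D₂κ₂²) solves the Ermakov equation with
constant C₀ = C₀⁽¹⁾D₁² + C₀⁽²⁾D₂² + D₁D₂J. -/
theorem statement_12
    (a b c d κ₁ κ₂ : ℝ → ℝ) (t₁ t₂ : ℝ) (C₀₁ C₀₂ D₁ D₂ : ℝ)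
    (ha : ContDiff ℝ 1 a) (hc : ContDiff ℝ 1 c) (hd : ContDiff ℝ 1 d)
    (hb : Continuous b)
    (hane : ∀ t ∈ Set.Ioo t₁ t₂, a t ≠ 0)
    (hκ₁ : ContDiffOn ℝ 2 κ₁ (Set.Ioo t₁ t₂)) (hκ₂ : ContDiffOn ℝ 2 κ₂ (Set.Ioo t₁ t₂))
    (hκ₁ne : ∀ t ∈ Set.Ioo t₁ t₂, κ₁ t ≠ 0) (hκ₂ne : ∀ t ∈ Set.Ioo t₁ t₂, κ₂ t ≠ 0)
    (hEq1 : ∀ t ∈ Set.Ioo t₁ t₂, deriv (deriv κ₁) t - (deriv a t / a t) * deriv κ₁ t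
        + Qfun a b c d t * κ₁ t = C₀₁ * (2 * a t) ^ 2 / κ₁ t ^ 3)
    (hEq2 : ∀ t ∈ Set.Ioo t₁ t₂, deriv (deriv κ₂) t - (deriv a t / a t) * deriv κ₂ t
        + Qfun a b c d t * κ₂ t = C₀₂ * (2 * a t) ^ 2 / κ₂ t ^ 3)
    (hpos : ∀ t ∈ Set.Ioo t₁ t₂, 0 < D₁ * κ₁ t ^ 2 + D₂ * κ₂ t ^ 2) :
    -- J is constant on the interval
    (∀ s ∈ Set.Ioo t₁ t₂, ∀ t ∈ Set.Ioo t₁ t₂,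
        Jfun a κ₁ κ₂ C₀₁ C₀₂ s = Jfun a κ₁ κ₂ C₀₁ C₀₂ t) ∧
    -- κ = √(D₁κ₁² + D₂κ₂²) solves the Ermakov equation with the stated constant
    (∀ t ∈ Set.Ioo t₁ t₂,
        deriv (deriv fun s => Real.sqrt (D₁ * κ₁ s ^ 2 + D₂ * κ₂ s ^ 2)) t
          - (deriv a t / a t) *
              deriv (fun s => Real.sqrt (D₁ * κ₁ s ^ 2 + D₂ * κ₂ s ^ 2)) t
          + Qfun a b c d t * Real.sqrt (D₁ * κ₁ t ^ 2 + D₂ * κ₂ t ^ 2)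
        = (C₀₁ * D₁ ^ 2 + C₀₂ * D₂ ^ 2 + D₁ * D₂ * Jfun a κ₁ κ₂ C₀₁ C₀₂ t)
            * (2 * a t) ^ 2 / Real.sqrt (D₁ * κ₁ t ^ 2 + D₂ * κ₂ t ^ 2) ^ 3) := by
  have H1 := hasDerivs_aux κ₁ t₁ t₂ hκ₁
  have H2 := hasDerivs_aux κ₂ t₁ t₂ hκ₂
  have E1 : ∀ t ∈ Set.Ioo t₁ t₂, deriv (deriv κ₁) t = (deriv a t / a t) * deriv κ₁ t
      - Qfun a b c d t * κ₁ t + C₀₁ * (2 * a t) ^ 2 / κ₁ t ^ 3 := fun t ht => by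
    linarith [hEq1 t ht]
  have E2 : ∀ t ∈ Set.Ioo t₁ t₂, deriv (deriv κ₂) t = (deriv a t / a t) * deriv κ₂ t
      - Qfun a b c d t * κ₂ t + C₀₂ * (2 * a t) ^ 2 / κ₂ t ^ 3 := fun t ht => by
    linarith [hEq2 t ht]
  constructor
  · have hJ : ∀ t ∈ Set.Ioo t₁ t₂, HasDerivAt (Jfun a κ₁ κ₂ C₀₁ C₀₂) 0 t := by
      intro t ht
      obtain ⟨h1, h1'⟩ := H1 t ht
      obtain ⟨h2, h2'⟩ := H2 t ht
      have hat : HasDerivAt a (deriv a t) t :=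
        (ha.differentiable (by norm_num) t).hasDerivAt
      have ea := hane t ht
      have e1 := hκ₁ne t ht
      have e2 := hκ₂ne t ht
      have hW := (h1.mul h2').sub (h1'.mul h2)
      have hA := (hW.div (hat.const_mul 2) (mul_ne_zero two_ne_zero ea)).pow 2
      have hB := ((h2.div h1 e1).pow 2).const_mul C₀₁
      have hC := ((h1.div h2 e2).pow 2).const_mul C₀₂
      have := (hA.add hB).add hC
      refine HasDerivAt.congr_deriv (f := Jfun a κ₁ κ₂ C₀₁ C₀₂) this ?_
      simp only [E1 t ht, E2 t ht, Pi.mul_apply, Pi.sub_apply, Pi.div_apply,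
        show (2 - 1 : ℕ) = 1 from rfl, pow_one, Nat.cast_ofNat]
      generalize Qfun a b c d t = q
      field_simp
      ring
    intro s hs t ht
    refine isOpen_Ioo.is_const_of_deriv_eq_zero isPreconnected_Ioo
      (fun x hx => (hJ x hx).differentiableAt.differentiableWithinAt)
      (fun x hx => (hJ x hx).deriv) hs ht
  · have hk : ∀ t ∈ Set.Ioo t₁ t₂,
        HasDerivAt (fun s => Real.sqrt (D₁ * κ₁ s ^ 2 + D₂ * κ₂ s ^ 2))
          ((D₁ * (κ₁ t * deriv κ₁ t) + D₂ * (κ₂ t * deriv κ₂ t)) /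
            Real.sqrt (D₁ * κ₁ t ^ 2 + D₂ * κ₂ t ^ 2)) t := by
      intro t ht
      have h := (((H1 t ht).1.pow 2).const_mul D₁).add (((H2 t ht).1.pow 2).const_mul D₂)
      have h' := h.sqrt (hpos t ht).ne'
      refine HasDerivAt.congr_deriv h' ?_
      have hr := (Real.sqrt_pos.2 (hpos t ht)).ne'
      simp only [Pi.add_apply, Pi.pow_apply]
      field_simp
      ring
    intro t ht
    have hev : deriv (fun s => Real.sqrt (D₁ * κ₁ s ^ 2 + D₂ * κ₂ s ^ 2)) =ᶠ[nhds t]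
        fun t => (D₁ * (κ₁ t * deriv κ₁ t) + D₂ * (κ₂ t * deriv κ₂ t)) /
            Real.sqrt (D₁ * κ₁ t ^ 2 + D₂ * κ₂ t ^ 2) := by
      filter_upwards [isOpen_Ioo.mem_nhds ht] with x hx using (hk x hx).deriv
    obtain ⟨h1, h1'⟩ := H1 t ht
    obtain ⟨h2, h2'⟩ := H2 t ht
    have hr := (Real.sqrt_pos.2 (hpos t ht)).ne'
    have hP := ((h1.mul h1').const_mul D₁).add ((h2.mul h2').const_mul D₂)
    have hD : deriv (fun t => (D₁ * (κ₁ t * deriv κ₁ t) + D₂ * (κ₂ t * deriv κ₂ t)) /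
            Real.sqrt (D₁ * κ₁ t ^ 2 + D₂ * κ₂ t ^ 2)) t = _ := (hP.div (hk t ht) hr).deriv
    rw [hev.deriv_eq, hD, (hk t ht).deriv]
    have hS := Real.sq_sqrt (hpos t ht).le
    have ea := hane t ht
    have e1 := hκ₁ne t ht
    have e2 := hκ₂ne t ht
    simp only [E1 t ht, E2 t ht, Pi.mul_apply, Pi.add_apply, Jfun, Wfun]
    generalize Qfun a b c d t = q
    generalize Real.sqrt (D₁ * κ₁ t ^ 2 + D₂ * κ₂ t ^ 2) = r at *
    generalize deriv κ₁ t = u at *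
    generalize deriv κ₂ t = v at *
    generalize deriv a t = w at *
    generalize κ₁ t = x at *
    generalize κ₂ t = y at *
    generalize a t = z at *
    -- substitute the second derivatives, then clear the powers of the root
    have key : ∀ X Y : ℝ, ((D₁ * (u * u + x * X) + D₂ * (v * v + y * Y)) * r
        - (D₁ * (x * u) + D₂ * (y * v)) * ((D₁ * (x * u) + D₂ * (y * v)) / r)) / r ^ 2
        - w / z * ((D₁ * (x * u) + D₂ * (y * v)) / r) + q * r
        = ((D₁ * (u * u + x * X) + D₂ * (v * v + y * Y)) * (D₁ * x ^ 2 + D₂ * y ^ 2)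
          - (D₁ * (x * u) + D₂ * (y * v)) ^ 2
          - w / z * (D₁ * (x * u) + D₂ * (y * v)) * (D₁ * x ^ 2 + D₂ * y ^ 2)
          + q * (D₁ * x ^ 2 + D₂ * y ^ 2) ^ 2) / r ^ 3 := by
      intro X Y
      rw [← hS]
      field_simp
    rw [key]
    congr 1
    field_simp
    ring
end

section
/- (Generalized Ermakov invariant.) Let a, b, c, d : ℝ → ℝ with a, c, d continuously differentiable, b continuous, a(t) ≠ 0 on an open interval I, and Q(t) = 4ab + (a′/a − c − d)(c+d) − c′ − d′. Let κ₁, κ₂ : I → ℝ be twice continuously differentiable nonvanishing solutions of κᵢ′′ − (a′/a)κᵢ′ + Qκᵢ = C₀⁽ⁱ⁾(2a)²/κᵢ³ (i = 1, 2) with real constants C₀⁽¹⁾, C₀⁽²⁾, and set W = κ₁κ₂′ − κ₁′κ₂. Then the function t ↦ (W(t)/(2a(t)))² + C₀⁽¹⁾(κ₂(t)/κ₁(t))² + C₀⁽²⁾(κ₁(t)/κ₂(t))² has derivative identically zero on I (it is a constant of the motion). -/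
/-- Generalized Ermakov invariant: for two nonvanishing solutions
κ₁, κ₂ of κᵢ′′ − (a′/a)κᵢ′ + Qκᵢ = C₀⁽ⁱ⁾(2a)²/κᵢ³ on an open interval (t₁,t₂), the
function (W/(2a))² + C₀⁽¹⁾(κ₂/κ₁)² + C₀⁽²⁾(κ₁/κ₂)² has identically zero derivative. -/
theorem statement_13
    (a b c d κ₁ κ₂ : ℝ → ℝ) (t₁ t₂ : ℝ) (C₀₁ C₀₂ : ℝ)
    (ha : ContDiff ℝ 1 a) (hc : ContDiff ℝ 1 c) (hd : ContDiff ℝ 1 d)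
    (hb : Continuous b)
    (hane : ∀ t ∈ Set.Ioo t₁ t₂, a t ≠ 0)
    (hκ₁ : ContDiffOn ℝ 2 κ₁ (Set.Ioo t₁ t₂)) (hκ₂ : ContDiffOn ℝ 2 κ₂ (Set.Ioo t₁ t₂))
    (hκ₁ne : ∀ t ∈ Set.Ioo t₁ t₂, κ₁ t ≠ 0) (hκ₂ne : ∀ t ∈ Set.Ioo t₁ t₂, κ₂ t ≠ 0)
    (hEq1 : ∀ t ∈ Set.Ioo t₁ t₂, deriv (deriv κ₁) t - (deriv a t / a t) * deriv κ₁ t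
        + Qfun a b c d t * κ₁ t = C₀₁ * (2 * a t) ^ 2 / κ₁ t ^ 3)
    (hEq2 : ∀ t ∈ Set.Ioo t₁ t₂, deriv (deriv κ₂) t - (deriv a t / a t) * deriv κ₂ t
        + Qfun a b c d t * κ₂ t = C₀₂ * (2 * a t) ^ 2 / κ₂ t ^ 3) :
    ∀ t ∈ Set.Ioo t₁ t₂,
      deriv (fun s => (Wfun κ₁ κ₂ s / (2 * a s)) ^ 2
          + C₀₁ * (κ₂ s / κ₁ s) ^ 2 + C₀₂ * (κ₁ s / κ₂ s) ^ 2) t = 0 := by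
  intro t ht
  have hn : Set.Ioo t₁ t₂ ∈ nhds t := isOpen_Ioo.mem_nhds ht
  have hda : HasDerivAt a (deriv a t) t :=
    ((ha.differentiable (by norm_num)) t).hasDerivAt
  have key : ∀ κ : ℝ → ℝ, ContDiffOn ℝ 2 κ (Set.Ioo t₁ t₂) →
      HasDerivAt κ (deriv κ t) t ∧ HasDerivAt (deriv κ) (deriv (deriv κ) t) t := by
    intro κ hκ
    refine ⟨((hκ.differentiableOn (by norm_num)).differentiableAt hn).hasDerivAt, ?_⟩
    have h1 : ContDiffOn ℝ 1 (deriv κ) (Set.Ioo t₁ t₂) :=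
      hκ.deriv_of_isOpen isOpen_Ioo (by norm_num)
    exact ((h1.differentiableOn (by norm_num)).differentiableAt hn).hasDerivAt
  obtain ⟨h1, h1'⟩ := key κ₁ hκ₁
  obtain ⟨h2, h2'⟩ := key κ₂ hκ₂
  have a0 := hane t ht
  have k1 := hκ₁ne t ht
  have k2 := hκ₂ne t ht
  have e1 := hEq1 t ht
  have e2 := hEq2 t ht
  have hW : HasDerivAt (Wfun κ₁ κ₂)
      (deriv κ₁ t * deriv κ₂ t + κ₁ t * deriv (deriv κ₂) t
        - (deriv (deriv κ₁) t * κ₂ t + deriv κ₁ t * deriv κ₂ t)) t :=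
    (h1.mul h2').sub (h1'.mul h2)
  have hF := (((hW.fun_div (hda.const_mul 2) (mul_ne_zero two_ne_zero a0)).fun_pow 2).fun_add
    (((h2.fun_div h1 k1).fun_pow 2).const_mul C₀₁)).fun_add
    (((h1.fun_div h2 k2).fun_pow 2).const_mul C₀₂)
  rw [hF.deriv]
  generalize Qfun a b c d t = q at e1 e2
  have f1 : deriv (deriv κ₁) t = C₀₁ * (2 * a t) ^ 2 / κ₁ t ^ 3
      + (deriv a t / a t) * deriv κ₁ t - q * κ₁ t := by linarith
  have f2 : deriv (deriv κ₂) t = C₀₂ * (2 * a t) ^ 2 / κ₂ t ^ 3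
      + (deriv a t / a t) * deriv κ₂ t - q * κ₂ t := by linarith
  rw [f1, f2]
  simp only [Wfun, Nat.add_one_sub_one, Nat.reduceSub, pow_one, Nat.cast_ofNat]
  field_simp
  ring
end

section
/- (Generalized Abel identity.) Let a, b, c, d : ℝ → ℝ with a, c, d continuously differentiable, b continuous, a(t) ≠ 0 on an open interval I, and Q(t) = 4ab + (a′/a − c − d)(c+d) − c′ − d′. Let κ₁, κ₂ : I → ℝ be twice continuously differentiable nonvanishing solutions of κᵢ′′ − (a′/a)κᵢ′ + Qκᵢ = C₀⁽ⁱ⁾(2a)²/κᵢ³ (i = 1, 2) with real constants C₀⁽¹⁾, C₀⁽²⁾, and set W = κ₁κ₂′ − κ₁′κ₂. Then for all t ∈ I: (1/(2a))·d/dt(W/(2a)) + C₀⁽¹⁾·κ₂/κ₁³ − C₀⁽²⁾·κ₁/κ₂³ = 0. (When C₀⁽¹⁾ = C₀⁽²⁾ = 0 this reduces to Abel's theorem W/(2a) = constant.) -/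
/-- Generalized Abel identity: for two nonvanishing solutions κ₁, κ₂ of
κᵢ′′ − (a′/a)κᵢ′ + Qκᵢ = C₀⁽ⁱ⁾(2a)²/κᵢ³ on an open interval (t₁,t₂),
(1/(2a))·(W/(2a))′ + C₀⁽¹⁾κ₂/κ₁³ − C₀⁽²⁾κ₁/κ₂³ = 0. -/
theorem statement_14
    (a b c d κ₁ κ₂ : ℝ → ℝ) (t₁ t₂ : ℝ) (C₀₁ C₀₂ : ℝ)
    (ha : ContDiff ℝ 1 a) (hc : ContDiff ℝ 1 c) (hd : ContDiff ℝ 1 d)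
    (hb : Continuous b)
    (hane : ∀ t ∈ Set.Ioo t₁ t₂, a t ≠ 0)
    (hκ₁ : ContDiffOn ℝ 2 κ₁ (Set.Ioo t₁ t₂)) (hκ₂ : ContDiffOn ℝ 2 κ₂ (Set.Ioo t₁ t₂))
    (hκ₁ne : ∀ t ∈ Set.Ioo t₁ t₂, κ₁ t ≠ 0) (hκ₂ne : ∀ t ∈ Set.Ioo t₁ t₂, κ₂ t ≠ 0)
    (hEq1 : ∀ t ∈ Set.Ioo t₁ t₂, deriv (deriv κ₁) t - (deriv a t / a t) * deriv κ₁ t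
        + Qfun a b c d t * κ₁ t = C₀₁ * (2 * a t) ^ 2 / κ₁ t ^ 3)
    (hEq2 : ∀ t ∈ Set.Ioo t₁ t₂, deriv (deriv κ₂) t - (deriv a t / a t) * deriv κ₂ t
        + Qfun a b c d t * κ₂ t = C₀₂ * (2 * a t) ^ 2 / κ₂ t ^ 3) :
    ∀ t ∈ Set.Ioo t₁ t₂,
      (1 / (2 * a t)) * deriv (fun s => Wfun κ₁ κ₂ s / (2 * a s)) t
          + C₀₁ * κ₂ t / κ₁ t ^ 3 - C₀₂ * κ₁ t / κ₂ t ^ 3 = 0 := by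
  intro t ht
  have hda : HasDerivAt a (deriv a t) t :=
    ((ha.differentiable (by norm_num)) t).hasDerivAt
  have key : ∀ κ : ℝ → ℝ, ContDiffOn ℝ 2 κ (Set.Ioo t₁ t₂) →
      HasDerivAt κ (deriv κ t) t ∧ HasDerivAt (deriv κ) (deriv (deriv κ) t) t := by
    intro κ hκ
    have hn : Set.Ioo t₁ t₂ ∈ nhds t := isOpen_Ioo.mem_nhds ht
    have h1 : ContDiffOn ℝ 1 (deriv κ) (Set.Ioo t₁ t₂) :=
      hκ.deriv_of_isOpen isOpen_Ioo (by norm_num)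
    exact ⟨((hκ.differentiableOn (by norm_num)).differentiableAt hn).hasDerivAt,
      ((h1.differentiableOn (by norm_num)).differentiableAt hn).hasDerivAt⟩
  obtain ⟨h1, h1'⟩ := key κ₁ hκ₁
  obtain ⟨h2, h2'⟩ := key κ₂ hκ₂
  have hA := hane t ht
  have hk1 := hκ₁ne t ht
  have hk2 := hκ₂ne t ht
  have e1 := hEq1 t ht
  have e2 := hEq2 t ht
  have hW : HasDerivAt (fun s => Wfun κ₁ κ₂ s / (2 * a s)) _ t :=
    ((h1.mul h2').sub (h1'.mul h2)).div (hda.const_mul 2) (mul_ne_zero two_ne_zero hA)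
  rw [hW.deriv]
  have f1 : deriv (deriv κ₁) t = C₀₁ * (2 * a t) ^ 2 / κ₁ t ^ 3
      + (deriv a t / a t) * deriv κ₁ t - Qfun a b c d t * κ₁ t := by linarith
  have f2 : deriv (deriv κ₂) t = C₀₂ * (2 * a t) ^ 2 / κ₂ t ^ 3
      + (deriv a t / a t) * deriv κ₂ t - Qfun a b c d t * κ₂ t := by linarith
  simp only [Pi.mul_apply, Pi.sub_apply]
  rw [f1, f2]
  generalize Qfun a b c d t = q
  field_simp
  ring
end

section
/- Let a, b, c, d : ℝ → ℝ with a, c, d continuously differentiable, b continuous, a(t) ≠ 0 on an open interval I, and Q(t) = 4ab + (a′/a − c − d)(c+d) − c′ − d′. Let κ₁, κ₂ : I → ℝ be twice continuously differentiable nonvanishing solutions of κᵢ′′ − (a′/a)κᵢ′ + Qκᵢ = C₀⁽ⁱ⁾(2a)²/κᵢ³ (i = 1, 2) with real constants C₀⁽¹⁾, C₀⁽²⁾, and set W = κ₁κ₂′ − κ₁′κ₂. Then for all t ∈ I: d/dt[(κ₂/κ₁)·(W/(2a))] = (2a/κ₁²)·[(W/(2a))² − C₀⁽¹⁾(κ₂/κ₁)²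 + C₀⁽²⁾(κ₁/κ₂)²]. -/
/-- for two nonvanishing solutions κ₁, κ₂ of
κᵢ′′ − (a′/a)κᵢ′ + Qκᵢ = C₀⁽ⁱ⁾(2a)²/κᵢ³ on an open interval (t₁,t₂),
d/dt[(κ₂/κ₁)(W/(2a))] = (2a/κ₁²)[(W/(2a))² − C₀⁽¹⁾(κ₂/κ₁)² + C₀⁽²⁾(κ₁/κ₂)²]. -/
theorem statement_15
    (a b c d κ₁ κ₂ : ℝ → ℝ) (t₁ t₂ : ℝ) (C₀₁ C₀₂ : ℝ)
    (ha : ContDiff ℝ 1 a) (hc : ContDiff ℝ 1 c) (hd : ContDiff ℝ 1 d)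
    (hb : Continuous b)
    (hane : ∀ t ∈ Set.Ioo t₁ t₂, a t ≠ 0)
    (hκ₁ : ContDiffOn ℝ 2 κ₁ (Set.Ioo t₁ t₂)) (hκ₂ : ContDiffOn ℝ 2 κ₂ (Set.Ioo t₁ t₂))
    (hκ₁ne : ∀ t ∈ Set.Ioo t₁ t₂, κ₁ t ≠ 0) (hκ₂ne : ∀ t ∈ Set.Ioo t₁ t₂, κ₂ t ≠ 0)
    (hEq1 : ∀ t ∈ Set.Ioo t₁ t₂, deriv (deriv κ₁) t - (deriv a t / a t) * deriv κ₁ t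
        + Qfun a b c d t * κ₁ t = C₀₁ * (2 * a t) ^ 2 / κ₁ t ^ 3)
    (hEq2 : ∀ t ∈ Set.Ioo t₁ t₂, deriv (deriv κ₂) t - (deriv a t / a t) * deriv κ₂ t
        + Qfun a b c d t * κ₂ t = C₀₂ * (2 * a t) ^ 2 / κ₂ t ^ 3) :
    ∀ t ∈ Set.Ioo t₁ t₂,
      deriv (fun s => (κ₂ s / κ₁ s) * (Wfun κ₁ κ₂ s / (2 * a s))) t
        = (2 * a t / κ₁ t ^ 2) * ((Wfun κ₁ κ₂ t / (2 * a t)) ^ 2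
            - C₀₁ * (κ₂ t / κ₁ t) ^ 2 + C₀₂ * (κ₁ t / κ₂ t) ^ 2) := by
  intro t ht
  have key : ∀ κ : ℝ → ℝ, ContDiffOn ℝ 2 κ (Set.Ioo t₁ t₂) →
      HasDerivAt κ (deriv κ t) t ∧ HasDerivAt (deriv κ) (deriv (deriv κ) t) t := by
    intro κ h
    have hn : Set.Ioo t₁ t₂ ∈ nhds t := isOpen_Ioo.mem_nhds ht
    refine ⟨((h.differentiableOn (by norm_num)).differentiableAt hn).hasDerivAt, ?_⟩
    have h1 : ContDiffOn ℝ 1 (deriv κ) (Set.Ioo t₁ t₂) :=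
      h.deriv_of_isOpen isOpen_Ioo (by norm_num)
    exact ((h1.differentiableOn (by norm_num)).differentiableAt hn).hasDerivAt
  obtain ⟨h1, h1'⟩ := key κ₁ hκ₁
  obtain ⟨h2, h2'⟩ := key κ₂ hκ₂
  have hA : HasDerivAt a (deriv a t) t :=
    ((ha.differentiable (by norm_num)) t).hasDerivAt
  have n1 := hκ₁ne t ht
  have n2 := hκ₂ne t ht
  have na := hane t ht
  have e1 := hEq1 t ht
  have e2 := hEq2 t ht
  have hW : HasDerivAt (Wfun κ₁ κ₂) _ t := (h1.mul h2').sub (h1'.mul h2)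
  have hF := (h2.div h1 n1).mul (hW.div (hA.const_mul 2) (mul_ne_zero two_ne_zero na))
  refine hF.deriv.trans ?_
  have e1' : deriv (deriv κ₁) t = C₀₁ * (2 * a t) ^ 2 / κ₁ t ^ 3
      + (deriv a t / a t) * deriv κ₁ t - Qfun a b c d t * κ₁ t := by linarith
  have e2' : deriv (deriv κ₂) t = C₀₂ * (2 * a t) ^ 2 / κ₂ t ^ 3
      + (deriv a t / a t) * deriv κ₂ t - Qfun a b c d t * κ₂ t := by linarith
  simp only [Pi.div_apply, Wfun]
  rw [e1', e2']
  generalize Qfun a b c d t = q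
  field_simp
  ring
end
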